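/- Let n ≥ 3 and let SO(n) be the group of n×n real special orthogonal matrices. Let ι : SO(3) → SO(n) be the block-diagonal embedding g ↦ diag(g, I_{n−3}). Suppose d is a bi-invariant distance on SO(n) (i.e. d(kg, kh) = d(g,h) = d(gk, hk) for all g,h,k) such that for some constant c > 0 and all g,h ∈ SO(3), d(ι(g), ι(h)) = c · arccos((tr(g h⁻¹) − 1)/2). Then d is NOT a restricted negative definite kernel on SO(n): there exist m, elements g₁,…,g_m ∈ SO(n) and ξ₁,…,ξ_m ∈ ℂ with ∑ᵢ ξᵢ = 0 such that the real part of ∑_{i,j} d(gᵢ,gⱼ) ξᵢ conj(ξⱼ) is strictly positive. -/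

import Mathlib

/-- `SO(n)` as found in Mathlib is only a submonoid of the matrices; we endow it with its
natural group structure (the inverse being the transpose). -/
noncomputable instance instGroupSO (n : ℕ) : Group (Matrix.specialOrthogonalGroup (Fin n) ℝ) :=
  { (inferInstance : Monoid (Matrix.specialOrthogonalGroup (Fin n) ℝ)) with
    inv := fun g => ⟨star g.1, by
      rw [Matrix.mem_specialUnitaryGroup_iff]
      refine ⟨Unitary.star_mem g.2.1, ?_⟩
      have hdet : (g.1).det = 1 := g.2.2
      simp [Matrix.star_eq_conjTranspose, Matrix.det_conjTranspose, hdet]⟩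
    inv_mul_cancel := fun g => by
      apply Subtype.ext
      exact (Unitary.mem_iff.mp g.2.1).1 }

/-- `SO(n)` is a topological group. -/
instance instTopGroupSO (n : ℕ) : IsTopologicalGroup (Matrix.specialOrthogonalGroup (Fin n) ℝ) where
  continuous_mul := by
    apply Continuous.subtype_mk
    exact (continuous_mul.comp ((continuous_subtype_val.comp continuous_fst).prodMk
      (continuous_subtype_val.comp continuous_snd)))
  continuous_inv := by
    apply Continuous.subtype_mk
    exact continuous_star.comp continuous_subtype_val

/-- The signs of the Klein four-group of diagonal rotations. -/
def kleinSign (k : Fin 4) (i : Fin 3) : ℤ :=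
  if k = 0 then 1 else if (k : ℕ) = i + 1 then 1 else -1

/-- Eight integer rotation matrices: the Klein four-group and one of its cosets in the
tetrahedral group. -/
def tetMat (a : Fin 8) : Matrix (Fin 3) (Fin 3) ℤ := fun i j =>
  if (a : ℕ) < 4 then (if i = j then kleinSign (Fin.ofNat 4 a) i else 0)
  else (if j = i + 1 then kleinSign (Fin.ofNat 4 a) i else 0)

/-- The trace table. -/
def tetTr (a b : Fin 8) : ℤ :=
  if a = b then 3 else if ((a : ℕ) < 4 ↔ (b : ℕ) < 4) then -1 else 0

/-- The weighted distance table, in units of `π / 3`. -/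
def tetW (a b : Fin 8) : ℤ :=
  if a = b then 0 else if ((a : ℕ) < 4 ↔ (b : ℕ) < 4) then 3 else -2

theorem tetMat_mul : ∀ a, tetMat a * (tetMat a).transpose = 1 := by decide

theorem tetMat_det (a : Fin 8) : (tetMat a).det = 1 := by
  rw [Matrix.det_fin_three]
  revert a; decide

theorem tetMat_trace : ∀ a b, (tetMat a * (tetMat b).transpose).trace = tetTr a b := by decide

/-- The eight rotations as elements of `SO(3)`. -/
noncomputable def tetSO (a : Fin 8) : Matrix.specialOrthogonalGroup (Fin 3) ℝ :=
  ⟨(tetMat a).map (Int.castRingHom ℝ), by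
    rw [Matrix.mem_specialOrthogonalGroup_iff, Matrix.mem_orthogonalGroup_iff]
    constructor
    · have h := congrArg (fun M => M.map (Int.castRingHom ℝ)) (tetMat_mul a)
      simp only [Matrix.map_mul, Matrix.transpose_map] at h
      rw [h]; simp
    · have h := congrArg (Int.castRingHom ℝ) (tetMat_det a)
      rw [RingHom.map_det] at h
      simpa using h⟩

theorem tetSO_trace (a b : Fin 8) :
    Matrix.trace ((tetSO a * (tetSO b)⁻¹ : Matrix.specialOrthogonalGroup (Fin 3) ℝ) :
      Matrix (Fin 3) (Fin 3) ℝ) = (tetTr a b : ℝ) := by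
  have h1 : ((tetSO a * (tetSO b)⁻¹ : Matrix.specialOrthogonalGroup (Fin 3) ℝ) :
      Matrix (Fin 3) (Fin 3) ℝ) =
      (tetMat a * (tetMat b).transpose).map (Int.castRingHom ℝ) := by
    rw [Matrix.map_mul, Matrix.transpose_map]
    rfl
  rw [h1, ← tetMat_trace]
  simp [Matrix.trace]

theorem arccos_neg_half : Real.arccos (-1 / 2) = 2 * Real.pi / 3 := by
  have h : Real.cos (2 * Real.pi / 3) = -1 / 2 := by
    rw [show 2 * Real.pi / 3 = Real.pi - Real.pi / 3 by ring, Real.cos_pi_sub,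
      Real.cos_pi_div_three]
    norm_num
  rw [← h, Real.arccos_cos] <;> linarith [Real.pi_pos]

theorem tet_arccos (a b : Fin 8) : Real.arccos (((tetTr a b : ℝ) - 1) / 2) =
    if a = b then 0 else if ((a : ℕ) < 4 ↔ (b : ℕ) < 4) then Real.pi else 2 * Real.pi / 3 := by
  unfold tetTr
  split_ifs
  · norm_num
  · norm_num
  · rw [← arccos_neg_half]; norm_num

open Real Finset in
/-- Any bi-invariant distance on `SO(n)`, `n ≥ 3`, restricting along the block-diagonal
embedding `ι : SO(3) → SO(n)` to a positive multiple of the rotation-angle distance of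
`SO(3)`, is NOT a restricted negative definite kernel. -/
theorem SOn_biinvariant_dist_not_restricted_negdef
    (n : ℕ) (hn : 3 ≤ n)
    (d : Matrix.specialOrthogonalGroup (Fin n) ℝ →
      Matrix.specialOrthogonalGroup (Fin n) ℝ → ℝ)
    -- `d` is a distance
    (hsymm : ∀ g h, d g h = d h g)
    (hzero : ∀ g h, d g h = 0 ↔ g = h)
    (htriangle : ∀ g h k, d g k ≤ d g h + d h k)
    -- `d` is bi-invariant
    (hleft : ∀ k g h, d (k * g) (k * h) = d g h)
    (hright : ∀ k g h, d (g * k) (h * k) = d g h)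
    -- `ι` is the block-diagonal embedding `g ↦ diag(g, I_{n-3})`
    (ι : Matrix.specialOrthogonalGroup (Fin 3) ℝ → Matrix.specialOrthogonalGroup (Fin n) ℝ)
    (hι : ∀ g (i j : Fin n), (ι g : Matrix (Fin n) (Fin n) ℝ) i j =
      if hi : (i : ℕ) < 3 then
        (if hj : (j : ℕ) < 3 then (g : Matrix (Fin 3) (Fin 3) ℝ) ⟨i, hi⟩ ⟨j, hj⟩ else 0)
      else (if (i : ℕ) = (j : ℕ) then 1 else 0))
    -- the restriction of `d` along `ι` is `c` times the rotation-angle distance on `SO(3)`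
    (c : ℝ) (hc : 0 < c)
    (hres : ∀ g h : Matrix.specialOrthogonalGroup (Fin 3) ℝ,
      d (ι g) (ι h) = c * arccos ((Matrix.trace ((g * h⁻¹ :
        Matrix.specialOrthogonalGroup (Fin 3) ℝ) : Matrix (Fin 3) (Fin 3) ℝ) - 1) / 2)) :
    ∃ (m : ℕ) (g : Fin m → Matrix.specialOrthogonalGroup (Fin n) ℝ) (ξ : Fin m → ℂ),
      (∑ i, ξ i) = 0 ∧
      0 < (∑ i, ∑ j, ((d (g i) (g j) : ℝ) : ℂ) * ξ i * (starRingEnd ℂ) (ξ j)).re := by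
  refine ⟨8, fun a => ι (tetSO a), fun a => if (a : ℕ) < 4 then 1 else -1, ?_, ?_⟩
  · simp [Fin.sum_univ_succ]
  · simp only [hres, tetSO_trace, tet_arccos]
    have key : (∑ i : Fin 8, ∑ j : Fin 8, ((c * (if i = j then 0 else
        if ((i : ℕ) < 4 ↔ (j : ℕ) < 4) then π else 2 * π / 3) : ℝ) : ℂ) *
        (if (i : ℕ) < 4 then 1 else -1) *
        (starRingEnd ℂ) (if (j : ℕ) < 4 then 1 else -1)) = ((c * (8 * π / 3) : ℝ) : ℂ) := by
      have hw : (∑ i : Fin 8, ∑ j : Fin 8, tetW i j) = 8 := by decide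
      have h1 : ((c * (8 * π / 3) : ℝ) : ℂ) = ((c * π / 3 : ℝ) : ℂ) * ((8 : ℤ) : ℂ) := by
        push_cast; ring
      rw [h1, ← hw, Int.cast_sum, Finset.mul_sum]
      refine Finset.sum_congr rfl fun i _ => ?_
      rw [Int.cast_sum, Finset.mul_sum]
      refine Finset.sum_congr rfl fun j _ => ?_
      unfold tetW
      by_cases h : i = j
      · simp [h]
      · by_cases hi : (i : ℕ) < 4 <;> by_cases hj : (j : ℕ) < 4 <;>
          simp [h, hi, hj] <;> ring
    rw [key, Complex.ofReal_re]
    have := Real.pi_pos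
    positivity
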